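/- For every x ∈ U, the first derivative of the mean curvature at t = 0 is ∂H(t)/∂t |_{t=0} = −(f(x) + φ'(0)) − (1/n) Δf(x). -/

import Mathlib

open MeasureTheory Real Set
open scoped RealInnerProductSpace

noncomputable section

abbrev En (n : ℕ) : Type := EuclideanSpace ℝ (Fin n)

/-- Partial derivative of `F` in the `i`-th coordinate direction. -/
def pd {m : ℕ} {E : Type} [NormedAddCommGroup E] [NormedSpace ℝ E]
    (i : Fin m) (F : En m → E) (x : En m) : E :=
  fderiv ℝ F x (EuclideanSpace.single i 1)

/-- The induced (first fundamental form) metric of a map `Y : U → ℝ^{n+1}`. -/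
def gmet {n : ℕ} (Y : En n → En (n + 1)) (x : En n) : Matrix (Fin n) (Fin n) ℝ :=
  Matrix.of fun i j => ⟪pd i Y x, pd j Y x⟫

/-- The variation `X(t,x) = (1 + t f(x) + φ(t)) Φ(x)`. -/
def Xvar {n : ℕ} (f : En n → ℝ) (φ : ℝ → ℝ) (Φ : En n → En (n + 1)) (t : ℝ) (x : En n) :
    En (n + 1) :=
  (1 + t * f x + φ t) • Φ x

/-- Second fundamental form `h_{ij} = ⟨∂X/∂x_i, ∂N/∂x_j⟩`. -/
def sff {n : ℕ} (Y Nf : En n → En (n + 1)) (x : En n) : Matrix (Fin n) (Fin n) ℝ :=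
  Matrix.of fun i j => ⟪pd i Y x, pd j Nf x⟫

/-- Mean curvature `H = (1/n) Σ g^{ij} h_{ij}`. -/
def Hmean {n : ℕ} (Y Nf : En n → En (n + 1)) (x : En n) : ℝ :=
  (1 / (n : ℝ)) * ∑ i, ∑ j, (gmet Y x)⁻¹ i j * sff Y Nf x i j

/-- The volume element `√(det g)`. -/
def vElem {n : ℕ} (Y : En n → En (n + 1)) (x : En n) : ℝ :=
  Real.sqrt (gmet Y x).det

/-- `|∇u|² = Σ g^{ij} ∂_i u ∂_j u` with respect to the metric of `Φ`. -/
def gradSq {n : ℕ} (Φ : En n → En (n + 1)) (u : En n → ℝ) (x : En n) : ℝ :=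
  ∑ i, ∑ j, (gmet Φ x)⁻¹ i j * pd i u x * pd j u x

/-- Tangential gradient `∇u = Σ g^{ij} ∂_i u ∂_j Φ ∈ ℝ^{n+1}`. -/
def gradV {n : ℕ} (Φ : En n → En (n + 1)) (u : En n → ℝ) (x : En n) : En (n + 1) :=
  ∑ i, ∑ j, ((gmet Φ x)⁻¹ i j * pd i u x) • pd j Φ x

/-- Laplace–Beltrami operator `Δu = (1/√g) Σ ∂_i (√g g^{ij} ∂_j u)`. -/
def lapl {n : ℕ} (Φ : En n → En (n + 1)) (u : En n → ℝ) (x : En n) : ℝ :=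
  (vElem Φ x)⁻¹ * ∑ i, ∑ j, pd i (fun y => vElem Φ y * (gmet Φ y)⁻¹ i j * pd j u y) x

/-- Christoffel symbols of the metric of `Φ`. -/
def christoffel {n : ℕ} (Φ : En n → En (n + 1)) (k i j : Fin n) (x : En n) : ℝ :=
  (1 / 2) * ∑ l, (gmet Φ x)⁻¹ k l *
    (pd i (fun y => gmet Φ y l j) x + pd j (fun y => gmet Φ y l i) x
      - pd l (fun y => gmet Φ y i j) x)

/-- Hessian `(∇²u)_{ij} = ∂²u/∂x_i∂x_j − Σ_k Γ^k_{ij} ∂_k u`. -/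
def hess {n : ℕ} (Φ : En n → En (n + 1)) (u : En n → ℝ) (x : En n) (i j : Fin n) : ℝ :=
  pd i (fun y => pd j u y) x - ∑ k, christoffel Φ k i j x * pd k u x

section MatrixCalculus

variable {ι E : Type*} [Fintype ι] [DecidableEq ι] [NormedAddCommGroup E] [NormedSpace ℝ E]

theorem differentiableAt_matrix_det {G : E → Matrix ι ι ℝ} {x : E}
    (hG : ∀ i j, DifferentiableAt ℝ (fun y => G y i j) x) :
    DifferentiableAt ℝ (fun y => (G y).det) x := by
  simp only [Matrix.det_apply]
  refine DifferentiableAt.fun_sum fun σ _ => DifferentiableAt.const_smul ?_ _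
  exact (HasFDerivAt.finsetProd fun i _ => (hG (σ i) i).hasFDerivAt).differentiableAt

theorem differentiableAt_matrix_inv {G : E → Matrix ι ι ℝ} {x : E}
    (hG : ∀ i j, DifferentiableAt ℝ (fun y => G y i j) x) (hx : (G x).det ≠ 0) (i j : ι) :
    DifferentiableAt ℝ (fun y => (G y)⁻¹ i j) x := by
  simp only [Matrix.inv_def, Matrix.smul_apply, Ring.inverse_eq_inv', smul_eq_mul,
    Matrix.adjugate_apply]
  refine ((differentiableAt_matrix_det hG).inv hx).mul (differentiableAt_matrix_det fun k l => ?_)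
  by_cases hk : k = j
  · subst hk; simp
  · simpa [Matrix.updateRow_ne hk] using hG k l

/-- Jacobi's formula along a line through an invertible matrix. -/
theorem hasDerivAt_det_add_smul (A M : Matrix ι ι ℝ) (hA : A.det ≠ 0) :
    HasDerivAt (fun t : ℝ => (A + t • M).det) (A.det * (A⁻¹ * M).trace) 0 := by
  have hfac : ∀ t : ℝ, (A + t • M).det = A.det * (1 + t • (A⁻¹ * M)).det := fun t => by
    rw [← Matrix.det_mul, mul_add, Matrix.mul_one, Matrix.mul_smul,
      Matrix.mul_nonsing_inv_cancel_left _ _ (isUnit_iff_ne_zero.2 hA)]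
  simp only [hfac]
  refine HasDerivAt.const_mul _ ?_
  rw [funext fun t : ℝ => Matrix.det_one_add_smul t (A⁻¹ * M)]
  generalize (Matrix.det (1 + (Polynomial.X : Polynomial ℝ) •
    (A⁻¹ * M).map Polynomial.C)).divX.divX = P
  have := (((hasDerivAt_id (0 : ℝ)).const_mul (A⁻¹ * M).trace).const_add 1).add
    ((P.hasDerivAt 0).mul ((hasDerivAt_id (0 : ℝ)).pow 2))
  exact this.congr_deriv (by simp)

/-- Jacobi's formula for the derivative of a determinant. -/
theorem fderiv_matrix_det {G : E → Matrix ι ι ℝ} {x : E}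
    (hG : ∀ i j, DifferentiableAt ℝ (fun y => G y i j) x) (hx : (G x).det ≠ 0) (v : E) :
    fderiv ℝ (fun y => (G y).det) x v
      = (G x).det * ∑ i, ∑ j, (G x)⁻¹ i j * fderiv ℝ (fun y => G y j i) x v := by
  set D : (ι → ι → ℝ) → ℝ := fun M => (Matrix.of M).det
  set K : E → ι → ι → ℝ := fun y i j => G y i j
  have hD : DifferentiableAt ℝ D (K x) := differentiableAt_matrix_det fun i j => by
    simp only [Matrix.of_apply]
    fun_prop
  have hK : DifferentiableAt ℝ K x :=
    differentiableAt_pi.2 fun i => differentiableAt_pi.2 fun j => hG i j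
  have hKv : ∀ i j, fderiv ℝ K x v i j = fderiv ℝ (fun y => G y i j) x v := fun i j => by
    have := hasFDerivAt_pi'.1 (hasFDerivAt_pi'.1 hK.hasFDerivAt i) j
    exact (congrArg (fun L : E →L[ℝ] ℝ => L v) this.fderiv).symm
  have hline := hD.hasFDerivAt.hasLineDerivAt (fderiv ℝ K x v)
  have hjac := hasDerivAt_det_add_smul (G x) (Matrix.of (fderiv ℝ K x v)) hx
  have hchain : fderiv ℝ (fun y => (G y).det) x v = fderiv ℝ D (K x) (fderiv ℝ K x v) := by
    change fderiv ℝ (D ∘ K) x v = _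
    rw [fderiv_comp x hD hK]; rfl
  rw [hchain, HasDerivAt.unique hline hjac]
  simp [Matrix.trace, Matrix.mul_apply, hKv]

end MatrixCalculus

section PartialDerivatives

variable {m : ℕ} {E : Type} [NormedAddCommGroup E] {x : En m} (i : Fin m)

theorem pd_congr [NormedSpace ℝ E] {F F' : En m → E} (h : F =ᶠ[nhds x] F') :
    pd i F x = pd i F' x := by
  rw [pd, h.fderiv_eq, pd]

theorem pd_sum [NormedSpace ℝ E] {ι : Type*} {s : Finset ι} {F : ι → En m → E}
    (h : ∀ k ∈ s, DifferentiableAt ℝ (F k) x) :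
    pd i (fun y => ∑ k ∈ s, F k y) x = ∑ k ∈ s, pd i (F k) x := by
  simp [pd, fderiv_fun_sum h]

theorem pd_smul [NormedSpace ℝ E] {c : En m → ℝ} {F : En m → E} (hc : DifferentiableAt ℝ c x)
    (hF : DifferentiableAt ℝ F x) :
    pd i (fun y => c y • F y) x = c x • pd i F x + pd i c x • F x := by
  simp [pd, fderiv_fun_smul hc hF]

theorem pd_mul {a b : En m → ℝ} (ha : DifferentiableAt ℝ a x) (hb : DifferentiableAt ℝ b x) :
    pd i (fun y => a y * b y) x = a x * pd i b x + b x * pd i a x := by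
  simp [pd, fderiv_fun_mul ha hb]

theorem pd_inner [InnerProductSpace ℝ E] {F F' : En m → E} (hF : DifferentiableAt ℝ F x)
    (hF' : DifferentiableAt ℝ F' x) :
    pd i (fun y => ⟪F y, F' y⟫) x = ⟪F x, pd i F' x⟫ + ⟪pd i F x, F' x⟫ := by
  simp [pd, fderiv_inner_apply ℝ hF hF']

theorem differentiableAt_pd [NormedSpace ℝ E] {F : En m → E} (hF : ContDiffAt ℝ 2 F x) :
    DifferentiableAt ℝ (pd i F) x :=
  ((hF.fderiv_right (m := 1) (by norm_num)).differentiableAt one_ne_zero).clm_apply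
    (differentiableAt_const _)

theorem pd_pd [NormedSpace ℝ E] {F : En m → E} (hF : ContDiffAt ℝ 2 F x) (j : Fin m) :
    pd i (pd j F) x = fderiv ℝ (fderiv ℝ F) x (EuclideanSpace.single i 1)
      (EuclideanSpace.single j 1) := by
  have h := (hF.fderiv_right (m := 1) (by norm_num)).differentiableAt one_ne_zero
  change fderiv ℝ (fun y => fderiv ℝ F y (EuclideanSpace.single j 1)) x _ = _
  rw [fderiv_clm_apply h (differentiableAt_const _)]
  simp

theorem pd_comm [NormedSpace ℝ E] {F : En m → E} (hF : ContDiffAt ℝ 2 F x) (j : Fin m) :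
    pd i (pd j F) x = pd j (pd i F) x := by
  rw [pd_pd i hF, pd_pd j hF]
  exact hF.isSymmSndFDerivAt (by simp) _ _

/-- The time derivative of a spatial partial derivative is the spatial partial derivative of the
time derivative. -/
theorem hasDerivAt_pd [NormedSpace ℝ E] {Q : ℝ × En m → E} {t : ℝ}
    (hQ : ContDiffAt ℝ 2 Q (t, x)) :
    HasDerivAt (fun s => pd i (fun y => Q (s, y)) x)
      (pd i (fun y => fderiv ℝ Q (t, y) (1, 0)) x) t := by
  have hd : DifferentiableAt ℝ (fderiv ℝ Q) (t, x) :=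
    (hQ.fderiv_right (m := 1) (by norm_num)).differentiableAt one_ne_zero
  have hslice : ∀ s, HasFDerivAt (fun y : En m => (s, y)) (ContinuousLinearMap.inr ℝ ℝ (En m)) x :=
    fun s => hasFDerivAt_prodMk_right s x
  have hev : ∀ᶠ s in nhds t, DifferentiableAt ℝ Q (s, x) := by
    have h1 : ∀ᶠ p in nhds (t, x), DifferentiableAt ℝ Q p :=
      (hQ.eventually (by simp)).mono fun p hp => hp.differentiableAt two_ne_zero
    exact (Continuous.prodMk_left x).tendsto t |>.eventually h1
  have hL : (fun s => pd i (fun y => Q (s, y)) x)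
      =ᶠ[nhds t] fun s => fderiv ℝ Q (s, x) (0, EuclideanSpace.single i 1) := by
    filter_upwards [hev] with s hs
    have := (HasFDerivAt.comp x hs.hasFDerivAt (hslice s)).fderiv
    rw [Function.comp_def] at this
    rw [pd, this]
    simp
  have hR : pd i (fun y => fderiv ℝ Q (t, y) (1, 0)) x
      = fderiv ℝ (fderiv ℝ Q) (t, x) (0, EuclideanSpace.single i 1) (1, 0) := by
    have hc := HasFDerivAt.comp x hd.hasFDerivAt (hslice t)
    rw [Function.comp_def] at hc
    rw [pd, (hc.clm_apply (hasFDerivAt_const ((1 : ℝ), (0 : En m)) x)).fderiv]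
    simp
  rw [hR, hQ.isSymmSndFDerivAt (by simp) _ _]
  refine HasDerivAt.congr_of_eventuallyEq ?_ hL
  have hc : HasDerivAt (fun s : ℝ => (s, x)) ((1 : ℝ), (0 : En m)) t :=
    (hasDerivAt_id t).prodMk (hasDerivAt_const t x)
  have hd' := hd.hasFDerivAt.comp_hasDerivAt t hc
  rw [Function.comp_def] at hd'
  simpa using hd'.clm_apply (hasDerivAt_const t ((0 : ℝ), EuclideanSpace.single i (1 : ℝ)))

end PartialDerivatives

section Hypersurface

variable {n : ℕ} {Φ : En n → En (n + 1)} {x : En n}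

theorem gmet_apply (Y : En n → En (n + 1)) (x : En n) (i j : Fin n) :
    gmet Y x i j = ⟪pd i Y x, pd j Y x⟫ := rfl

theorem gmet_comm (Y : En n → En (n + 1)) (x : En n) (i j : Fin n) :
    gmet Y x i j = gmet Y x j i := by
  rw [gmet_apply, gmet_apply, real_inner_comm]

theorem gmet_inv_comm (Y : En n → En (n + 1)) (x : En n) (i j : Fin n) :
    (gmet Y x)⁻¹ i j = (gmet Y x)⁻¹ j i := by
  have h : (gmet Y x).transpose = gmet Y x := Matrix.ext fun i j => gmet_comm Y x j i
  rw [← Matrix.transpose_apply (gmet Y x)⁻¹ i j, Matrix.transpose_nonsing_inv, h]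

theorem sum_gmet_inv_mul_gmet {Y : En n → En (n + 1)} (h : (gmet Y x).det ≠ 0) (i j : Fin n) :
    ∑ k, (gmet Y x)⁻¹ i k * gmet Y x k j = if i = j then 1 else 0 := by
  rw [← Matrix.mul_apply, Matrix.nonsing_inv_mul _ (isUnit_iff_ne_zero.2 h), Matrix.one_apply]

theorem sum_sum_gmet_inv_mul_gmet {Y : En n → En (n + 1)} (h : (gmet Y x).det ≠ 0) :
    ∑ i, ∑ j, (gmet Y x)⁻¹ i j * gmet Y x i j = n := by
  have : ∀ i, ∑ j, (gmet Y x)⁻¹ i j * gmet Y x i j = 1 := fun i => by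
    simpa [gmet_comm Y x i] using sum_gmet_inv_mul_gmet h i i
  simp [this]

theorem differentiableAt_gmet (hΦ : ContDiffAt ℝ 2 Φ x) (i j : Fin n) :
    DifferentiableAt ℝ (fun y => gmet Φ y i j) x :=
  (differentiableAt_pd i hΦ).inner ℝ (differentiableAt_pd j hΦ)

theorem differentiableAt_vElem (hΦ : ContDiffAt ℝ 2 Φ x) (hdet : (gmet Φ x).det ≠ 0) :
    DifferentiableAt ℝ (vElem Φ) x :=
  (differentiableAt_matrix_det (differentiableAt_gmet hΦ)).sqrt hdet

/-- The logarithmic derivative of the volume element. -/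
theorem pd_vElem (hΦ : ContDiffAt ℝ 2 Φ x) (hdet : 0 < (gmet Φ x).det) (l : Fin n) :
    pd l (vElem Φ) x
      = vElem Φ x * ∑ i, ∑ j, (gmet Φ x)⁻¹ i j * ⟪pd i Φ x, pd j (pd l Φ) x⟫ := by
  have hG := differentiableAt_gmet hΦ
  have hsq : vElem Φ x * vElem Φ x = (gmet Φ x).det := Real.mul_self_sqrt hdet.le
  have hv : vElem Φ x ≠ 0 := (Real.sqrt_pos.2 hdet).ne'
  have hterm : ∀ i j, fderiv ℝ (fun y => gmet Φ y j i) x (EuclideanSpace.single l 1)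
      = ⟪pd j Φ x, pd i (pd l Φ) x⟫ + ⟪pd i Φ x, pd j (pd l Φ) x⟫ := fun i j => by
    have := pd_inner l (differentiableAt_pd j hΦ) (differentiableAt_pd i hΦ)
    rw [pd_comm l hΦ i, pd_comm l hΦ j, real_inner_comm (pd i Φ x)] at this
    exact this
  have hsum : ∑ i, ∑ j, (gmet Φ x)⁻¹ i j * fderiv ℝ (fun y => gmet Φ y j i) x
        (EuclideanSpace.single l 1)
      = 2 * ∑ i, ∑ j, (gmet Φ x)⁻¹ i j * ⟪pd i Φ x, pd j (pd l Φ) x⟫ := by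
    simp_rw [hterm, mul_add, Finset.sum_add_distrib]
    rw [Finset.sum_comm, two_mul]
    congr 1
    exact Finset.sum_congr rfl fun i _ => Finset.sum_congr rfl fun j _ => by
      rw [gmet_inv_comm Φ x j i]
  have h1 : pd l (vElem Φ) x = 1 / (2 * vElem Φ x) *
      fderiv ℝ (fun y => (gmet Φ y).det) x (EuclideanSpace.single l 1) := by
    change fderiv ℝ (fun y => √(gmet Φ y).det) x _ = _
    rw [fderiv_sqrt (differentiableAt_matrix_det hG) hdet.ne']
    rfl
  rw [h1, fderiv_matrix_det hG hdet.ne', hsum, ← hsq]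
  field_simp

theorem gradV_eq (Φ : En n → En (n + 1)) (f : En n → ℝ) (y : En n) :
    gradV Φ f y = ∑ i, (∑ j, (gmet Φ y)⁻¹ i j * pd j f y) • pd i Φ y := by
  rw [gradV, Finset.sum_comm]
  simp_rw [Finset.sum_smul]
  exact Finset.sum_congr rfl fun i _ => Finset.sum_congr rfl fun j _ => by
    rw [gmet_inv_comm Φ y j i]

theorem differentiableAt_gmet_inv_mul_pd {f : En n → ℝ} (hΦ : ContDiffAt ℝ 2 Φ x)
    (hf : ContDiffAt ℝ 2 f x) (hdet : (gmet Φ x).det ≠ 0) (i j : Fin n) :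
    DifferentiableAt ℝ (fun y => (gmet Φ y)⁻¹ i j * pd j f y) x :=
  (differentiableAt_matrix_inv (differentiableAt_gmet hΦ) hdet i j).mul (differentiableAt_pd j hf)

/-- The Laplace–Beltrami operator is the tangential divergence of the tangential gradient. -/
theorem sum_inner_pd_gradV {f : En n → ℝ} (hΦ : ContDiffAt ℝ 2 Φ x) (hf : ContDiffAt ℝ 2 f x)
    (hdet : 0 < (gmet Φ x).det) :
    ∑ i, ∑ j, (gmet Φ x)⁻¹ i j * ⟪pd i Φ x, pd j (gradV Φ f) x⟫ = lapl Φ f x := by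
  set w : Fin n → En n → ℝ := fun i y => ∑ j, (gmet Φ y)⁻¹ i j * pd j f y
  have hv : vElem Φ x ≠ 0 := (Real.sqrt_pos.2 hdet).ne'
  have hterm := differentiableAt_gmet_inv_mul_pd hΦ hf hdet.ne'
  have hw : ∀ i, DifferentiableAt ℝ (w i) x := fun i => DifferentiableAt.fun_sum fun j _ => hterm i j
  have hlapl : lapl Φ f x = ∑ l, (pd l (w l) x + w l x *
      ∑ i, ∑ j, (gmet Φ x)⁻¹ i j * ⟪pd i Φ x, pd j (pd l Φ) x⟫) := by
    rw [lapl, Finset.mul_sum]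
    refine Finset.sum_congr rfl fun l _ => ?_
    have : ∀ j, pd l (fun y => vElem Φ y * (gmet Φ y)⁻¹ l j * pd j f y) x
        = vElem Φ x * pd l (fun y => (gmet Φ y)⁻¹ l j * pd j f y) x
          + ((gmet Φ x)⁻¹ l j * pd j f x) * pd l (vElem Φ) x := fun j => by
      simp_rw [mul_assoc (vElem Φ _)]
      exact pd_mul l (differentiableAt_vElem hΦ hdet.ne') (hterm l j)
    simp_rw [this, Finset.sum_add_distrib, ← Finset.mul_sum, ← Finset.sum_mul]
    rw [← pd_sum l fun j _ => hterm l j, pd_vElem hΦ hdet]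
    change _ * (_ * pd l (w l) x + w l x * _) = _
    field_simp
  have hgrad : ∀ j, pd j (gradV Φ f) x
      = ∑ l, (w l x • pd j (pd l Φ) x + pd j (w l) x • pd l Φ x) := fun j => by
    rw [show gradV Φ f = fun y => ∑ l, w l y • pd l Φ y from funext fun y => gradV_eq Φ f y,
      pd_sum j fun l _ => (hw l).fun_smul (differentiableAt_pd l hΦ)]
    exact Finset.sum_congr rfl fun l _ => pd_smul j (hw l) (differentiableAt_pd l hΦ)
  have hdiv : ∀ l, ∑ i, ∑ j, (gmet Φ x)⁻¹ i j * (pd j (w l) x * gmet Φ x i l) = pd l (w l) x :=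
    fun l => by
      rw [Finset.sum_comm]
      have : ∀ j, ∑ i, (gmet Φ x)⁻¹ i j * (pd j (w l) x * gmet Φ x i l)
          = pd j (w l) x * if j = l then 1 else 0 := fun j => by
        rw [← sum_gmet_inv_mul_gmet hdet.ne' j l, Finset.mul_sum]
        exact Finset.sum_congr rfl fun i _ => by rw [gmet_inv_comm Φ x i j]; ring
      simp [this]
  have hexp : ∀ i j, (gmet Φ x)⁻¹ i j * ⟪pd i Φ x, pd j (gradV Φ f) x⟫
      = ∑ l, ((gmet Φ x)⁻¹ i j * (pd j (w l) x * gmet Φ x i l)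
        + w l x * ((gmet Φ x)⁻¹ i j * ⟪pd i Φ x, pd j (pd l Φ) x⟫)) := fun i j => by
    rw [hgrad, inner_sum, Finset.mul_sum]
    refine Finset.sum_congr rfl fun l _ => ?_
    rw [inner_add_right, real_inner_smul_right, real_inner_smul_right, gmet_apply]
    ring
  simp_rw [hexp, hlapl, fun i => Finset.sum_comm (s := Finset.univ) (t := Finset.univ)
    (f := fun j l => (gmet Φ x)⁻¹ i j * (pd j (w l) x * gmet Φ x i l)
        + w l x * ((gmet Φ x)⁻¹ i j * ⟪pd i Φ x, pd j (pd l Φ) x⟫))]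
  rw [Finset.sum_comm]
  refine Finset.sum_congr rfl fun l _ => ?_
  simp_rw [Finset.sum_add_distrib, hdiv l, Finset.mul_sum]

theorem inner_gradV_pd {f : En n → ℝ} (hdet : (gmet Φ x).det ≠ 0) (i : Fin n) :
    ⟪gradV Φ f x, pd i Φ x⟫ = pd i f x := by
  have : ∀ k, ∑ j, (gmet Φ x)⁻¹ k j * pd k f x * gmet Φ x j i
      = pd k f x * if k = i then 1 else 0 := fun k => by
    rw [← sum_gmet_inv_mul_gmet hdet k i, Finset.mul_sum]
    exact Finset.sum_congr rfl fun j _ => by ring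
  simp_rw [gradV, sum_inner, real_inner_smul_left, ← gmet_apply, this]
  simp

/-- A vector orthogonal to a unit normal and to all tangent vectors of an immersed hypersurface
vanishes. -/
theorem eq_zero_of_inner_normal_of_inner_pd {Y : En n → En (n + 1)} {ν V : En (n + 1)}
    (hpos : (gmet Y x).PosDef) (hν : ‖ν‖ = 1) (hνY : ∀ i, ⟪ν, pd i Y x⟫ = 0)
    (hVν : ⟪V, ν⟫ = 0) (hVY : ∀ i, ⟪V, pd i Y x⟫ = 0) : V = 0 := by
  have hli : LinearIndependent ℝ fun i => pd i Y x :=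
    Matrix.linearIndependent_of_posDef_gram (𝕜 := ℝ) hpos
  have hnot : ν ∉ Submodule.span ℝ (Set.range fun i => pd i Y x) := fun hmem => by
    have horth : ν ∈ (Submodule.span ℝ (Set.range fun i => pd i Y x))ᗮ := by
      rw [Submodule.mem_orthogonal']
      intro u hu
      induction hu using Submodule.span_induction with
      | mem u hu => obtain ⟨i, rfl⟩ := hu; exact hνY i
      | zero => simp
      | add u v _ _ hu hv => simp [inner_add_right, hu, hv]
      | smul c u _ hu => simp [real_inner_smul_right, hu]
    have := Submodule.inner_right_of_mem_orthogonal hmem horth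
    rw [inner_self_eq_zero] at this
    simp [this] at hν
  have hspan := (hli.option hnot).span_eq_top_of_card_eq_finrank' (by simp)
  refine inner_self_eq_zero (𝕜 := ℝ).1 ?_
  have hmem : V ∈ Submodule.span ℝ (Set.range fun o : Option (Fin n) =>
      (o.casesOn' ν fun i => pd i Y x : En (n + 1))) := hspan ▸ Submodule.mem_top
  have : ∀ u ∈ Submodule.span ℝ (Set.range fun o : Option (Fin n) =>
      (o.casesOn' ν fun i => pd i Y x : En (n + 1))), ⟪V, u⟫ = 0 := fun u hu => by
    induction hu using Submodule.span_induction with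
    | mem u hu =>
      obtain ⟨o, rfl⟩ := hu
      cases o with
      | none => exact hVν
      | some i => exact hVY i
    | zero => simp
    | add u v _ _ hu hv => simp [inner_add_right, hu, hv]
    | smul c u _ hu => simp [real_inner_smul_right, hu]
  exact this V hmem

end Hypersurface

section Variation

variable {n : ℕ} {Φ : En n → En (n + 1)} {f : En n → ℝ} {φ : ℝ → ℝ} {x : En n}

theorem inner_pd_eq_zero_of_norm_eq_one (hΦ : DifferentiableAt ℝ Φ x)
    (hsph : ∀ᶠ y in nhds x, ‖Φ y‖ = 1) (i : Fin n) : ⟪Φ x, pd i Φ x⟫ = 0 := by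
  have h := pd_inner i hΦ hΦ
  have hc : (fun y => ⟪Φ y, Φ y⟫) =ᶠ[nhds x] fun _ => (1 : ℝ) := by
    filter_upwards [hsph] with y hy
    rw [real_inner_self_eq_norm_sq, hy, one_pow]
  rw [pd_congr i hc, real_inner_comm (Φ x) (pd i Φ x)] at h
  simp only [pd, fderiv_fun_const, Pi.zero_apply, _root_.zero_apply] at h
  rw [pd]
  linarith

theorem Xvar_zero (hφ0 : φ 0 = 0) : Xvar f φ Φ 0 = Φ := by
  funext y
  simp [Xvar, hφ0]

theorem pd_Xvar (hΦ : DifferentiableAt ℝ Φ x) (hf : DifferentiableAt ℝ f x) (t : ℝ) (i : Fin n) :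
    pd i (Xvar f φ Φ t) x = (1 + t * f x + φ t) • pd i Φ x + (t * pd i f x) • Φ x := by
  have hc : HasFDerivAt (fun y => 1 + t * f y + φ t) (t • fderiv ℝ f x) x :=
    ((hf.hasFDerivAt.const_mul t).const_add 1).add_const _
  have h := pd_smul i hc.differentiableAt hΦ
  rwa [show pd i (fun y => 1 + t * f y + φ t) x = t * pd i f x by simp [pd, hc.fderiv]] at h

theorem hasDerivAt_pd_Xvar (hΦ : DifferentiableAt ℝ Φ x) (hf : DifferentiableAt ℝ f x)
    (hφ : DifferentiableAt ℝ φ 0) (i : Fin n) :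
    HasDerivAt (fun t => pd i (Xvar f φ Φ t) x)
      ((f x + deriv φ 0) • pd i Φ x + pd i f x • Φ x) 0 := by
  simp_rw [pd_Xvar hΦ hf]
  have hid := hasDerivAt_id (0 : ℝ)
  have h1 : HasDerivAt (fun t => 1 + t * f x + φ t) (f x + deriv φ 0) 0 := by
    simpa using ((hid.mul_const (f x)).const_add 1).fun_add hφ.hasDerivAt
  have h2 : HasDerivAt (fun t => t * pd i f x) (pd i f x) 0 := by
    simpa using hid.mul_const (pd i f x)
  exact (h1.smul_const _).fun_add (h2.smul_const _)

/-- The metric of a radial variation of the sphere varies initially by a multiple of itself. -/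
theorem hasDerivAt_gmet_Xvar (hΦ : DifferentiableAt ℝ Φ x) (hf : DifferentiableAt ℝ f x)
    (hφ : DifferentiableAt ℝ φ 0) (hφ0 : φ 0 = 0) (horth : ∀ i, ⟪Φ x, pd i Φ x⟫ = 0)
    (i j : Fin n) :
    HasDerivAt (fun t => gmet (Xvar f φ Φ t) x i j) (2 * (f x + deriv φ 0) * gmet Φ x i j) 0 := by
  have h := (hasDerivAt_pd_Xvar hΦ hf hφ i).inner ℝ (hasDerivAt_pd_Xvar hΦ hf hφ j)
  refine h.congr_deriv ?_
  rw [Xvar_zero hφ0, gmet_apply]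
  simp only [inner_add_left, inner_add_right, real_inner_smul_left, real_inner_smul_right, horth,
    real_inner_comm (Φ x) (pd i Φ x)]
  ring

/-- The normal of a radial variation of the sphere varies by minus the tangential gradient. -/
theorem deriv_normal_eq_neg_gradV {ν : ℝ → En (n + 1)} {W : En (n + 1)}
    (hΦ : DifferentiableAt ℝ Φ x) (hf : DifferentiableAt ℝ f x)
    (hφ : DifferentiableAt ℝ φ 0) (hφ0 : φ 0 = 0) (hsph : ‖Φ x‖ = 1)
    (horth : ∀ i, ⟪Φ x, pd i Φ x⟫ = 0) (hpos : (gmet Φ x).PosDef)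
    (hν : HasDerivAt ν W 0) (hunit : ∀ᶠ t in nhds 0, ‖ν t‖ = 1)
    (hνorth : ∀ i, ∀ᶠ t in nhds 0, ⟪ν t, pd i (Xvar f φ Φ t) x⟫ = 0) (hν0 : ν 0 = Φ x) :
    W = -gradV Φ f x := by
  have hWΦ : ⟪W, Φ x⟫ = 0 := by
    have h1 := hν.inner ℝ hν
    have h2 : (fun t => ⟪ν t, ν t⟫) =ᶠ[nhds 0] fun _ => (1 : ℝ) := by
      filter_upwards [hunit] with t ht
      rw [real_inner_self_eq_norm_sq, ht, one_pow]
    have h3 := h1.unique ((hasDerivAt_const (0 : ℝ) (1 : ℝ)).congr_of_eventuallyEq h2)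
    rw [hν0, real_inner_comm W] at h3
    linarith
  have hWi : ∀ i, ⟪W, pd i Φ x⟫ = -pd i f x := fun i => by
    have h1 := hν.inner ℝ (hasDerivAt_pd_Xvar hΦ hf hφ i)
    have h2 : (fun t => ⟪ν t, pd i (Xvar f φ Φ t) x⟫) =ᶠ[nhds 0] fun _ => (0 : ℝ) := hνorth i
    have h3 := h1.unique ((hasDerivAt_const (0 : ℝ) (0 : ℝ)).congr_of_eventuallyEq h2)
    rw [hν0, Xvar_zero hφ0, inner_add_right, real_inner_smul_right, real_inner_smul_right, horth,
      real_inner_self_eq_norm_sq, hsph] at h3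
    linarith
  have hgrad : ⟪gradV Φ f x, Φ x⟫ = 0 := by
    simp_rw [gradV, sum_inner, real_inner_smul_left, real_inner_comm (Φ x), horth]
    simp
  refine eq_neg_of_add_eq_zero_left
    (eq_zero_of_inner_normal_of_inner_pd hpos hsph horth ?_ fun i => ?_)
  · rw [inner_add_left, hWΦ, hgrad, add_zero]
  · rw [inner_add_left, hWi, inner_gradV_pd hpos.det_pos.ne', neg_add_cancel]

/-- First variation of the mean curvature in terms of the first variations of the two
fundamental forms, when they agree initially and the metric varies conformally. -/
theorem hasDerivAt_Hmean {Y M : ℝ → En n → En (n + 1)} {a : ℝ} {h' : Fin n → Fin n → ℝ}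
    (hdet : (gmet (Y 0) x).det ≠ 0)
    (hg : ∀ i j, HasDerivAt (fun t => gmet (Y t) x i j) (2 * a * gmet (Y 0) x i j) 0)
    (hh : ∀ i j, HasDerivAt (fun t => sff (Y t) (M t) x i j) (h' i j) 0)
    (h0 : ∀ i j, sff (Y 0) (M 0) x i j = gmet (Y 0) x i j) :
    HasDerivAt (fun t => Hmean (Y t) (M t) x)
      (1 / (n : ℝ) * (∑ i, ∑ j, (gmet (Y 0) x)⁻¹ i j * h' i j - 2 * a * n)) 0 := by
  have hdiff : ∀ i j, DifferentiableAt ℝ (fun t => gmet (Y t) x i j) 0 := fun i j =>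
    (hg i j).differentiableAt
  have hA := fun i j => (differentiableAt_matrix_inv hdiff hdet i j).hasDerivAt
  have hsum : ∀ {k : ℝ → Matrix (Fin n) (Fin n) ℝ} {k' : Fin n → Fin n → ℝ},
      (∀ i j, HasDerivAt (fun t => k t i j) (k' i j) 0) →
      HasDerivAt (fun t => ∑ i, ∑ j, (gmet (Y t) x)⁻¹ i j * k t i j)
        (∑ i, ∑ j, (deriv (fun t => (gmet (Y t) x)⁻¹ i j) 0 * k 0 i j
          + (gmet (Y 0) x)⁻¹ i j * k' i j)) 0 := fun hk =>
    HasDerivAt.fun_sum fun i _ => HasDerivAt.fun_sum fun j _ => (hA i j).fun_mul (hk i j)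
  have hconst : (fun t => ∑ i, ∑ j, (gmet (Y t) x)⁻¹ i j * gmet (Y t) x i j)
      =ᶠ[nhds 0] fun _ => (n : ℝ) := by
    filter_upwards [(differentiableAt_matrix_det hdiff).continuousAt.eventually_ne hdet] with t ht
    exact sum_sum_gmet_inv_mul_gmet ht
  have hzero := (hsum hg).unique ((hasDerivAt_const (0 : ℝ) (n : ℝ)).congr_of_eventuallyEq hconst)
  have htrace : ∑ i, ∑ j, (gmet (Y 0) x)⁻¹ i j * (2 * a * gmet (Y 0) x i j) = 2 * a * n := by
    simp_rw [← sum_sum_gmet_inv_mul_gmet hdet, Finset.mul_sum]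
    exact Finset.sum_congr rfl fun i _ => Finset.sum_congr rfl fun j _ => by ring
  refine ((hsum hh).const_mul (1 / (n : ℝ))).congr_deriv ?_
  simp only [Finset.sum_add_distrib, h0, htrace] at hzero ⊢
  rw [eq_neg_of_add_eq_zero_left hzero]
  ring

end Variation

/-- `∂H/∂t |_(t=0) = −(f + φ'(0)) − (1/n) Δf`. -/
theorem first_variation_mean_curvature {n : ℕ} (hn : 1 ≤ n) (U : Set (En n)) (hU : IsOpen U)
    (Φ : En n → En (n + 1)) (f : En n → ℝ) (φ : ℝ → ℝ) (ε : ℝ) (hε : 0 < ε)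
    (hΦ : ContDiffOn ℝ (⊤ : ℕ∞) Φ U) (hf : ContDiffOn ℝ (⊤ : ℕ∞) f U)
    (hφ : ContDiffOn ℝ (⊤ : ℕ∞) φ (Ioo (-ε) ε)) (hφ0 : φ 0 = 0)
    (hsph : ∀ x ∈ U, ‖Φ x‖ = 1)
    (himm : ∀ x ∈ U, (gmet Φ x).PosDef)
    (N : ℝ → En n → En (n + 1))
    (hNsm : ContDiffOn ℝ (⊤ : ℕ∞) (fun p : ℝ × En n => N p.1 p.2) (Ioo (-ε) ε ×ˢ U))
    (hNunit : ∀ t ∈ Ioo (-ε) ε, ∀ x ∈ U, ‖N t x‖ = 1)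
    (hNorth : ∀ t ∈ Ioo (-ε) ε, ∀ x ∈ U, ∀ i : Fin n, ⟪N t x, pd i (Xvar f φ Φ t) x⟫ = 0)
    (hN0 : ∀ x ∈ U, N 0 x = Φ x) :
    ∀ x ∈ U,
      deriv (fun t => Hmean (Xvar f φ Φ t) (N t) x) 0
        = -(f x + deriv φ 0) - (1 / (n : ℝ)) * lapl Φ f x := by
  intro x hx
  have h2 : (2 : WithTop ℕ∞) ≤ ((⊤ : ℕ∞) : WithTop ℕ∞) :=
    WithTop.coe_le_coe.2 (le_top : (2 : ℕ∞) ≤ ⊤)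
  have h0ε : (0 : ℝ) ∈ Ioo (-ε) ε := ⟨by linarith, hε⟩
  have hIoo : ∀ᶠ t in nhds (0 : ℝ), t ∈ Ioo (-ε) ε := isOpen_Ioo.mem_nhds h0ε
  have hΦ2 : ∀ y ∈ U, ContDiffAt ℝ 2 Φ y := fun y hy => (hΦ.contDiffAt (hU.mem_nhds hy)).of_le h2
  have hf2 : ∀ y ∈ U, ContDiffAt ℝ 2 f y := fun y hy => (hf.contDiffAt (hU.mem_nhds hy)).of_le h2
  have hΦ1 : ∀ y ∈ U, DifferentiableAt ℝ Φ y := fun y hy => (hΦ2 y hy).differentiableAt two_ne_zero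
  have hf1 : ∀ y ∈ U, DifferentiableAt ℝ f y := fun y hy => (hf2 y hy).differentiableAt two_ne_zero
  have hφ1 : DifferentiableAt ℝ φ 0 :=
    ((hφ.contDiffAt hIoo).of_le h2).differentiableAt two_ne_zero
  set Q : ℝ × En n → En (n + 1) := fun p => N p.1 p.2
  have hQ2 : ∀ y ∈ U, ContDiffAt ℝ 2 Q (0, y) := fun y hy =>
    (hNsm.contDiffAt ((isOpen_Ioo.prod hU).mem_nhds ⟨h0ε, hy⟩)).of_le h2
  have horth : ∀ y ∈ U, ∀ i, ⟪Φ y, pd i Φ y⟫ = 0 := fun y hy =>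
    inner_pd_eq_zero_of_norm_eq_one (hΦ1 y hy) (Filter.mem_of_superset (hU.mem_nhds hy) hsph)
  have hW : ∀ y ∈ U, fderiv ℝ Q (0, y) (1, 0) = -gradV Φ f y := fun y hy => by
    refine deriv_normal_eq_neg_gradV (ν := fun t => N t y) (hΦ1 y hy) (hf1 y hy) hφ1 hφ0
      (hsph y hy) (horth y hy) (himm y hy) ?_ (hIoo.mono fun t ht => hNunit t ht y hy)
      (fun i => hIoo.mono fun t ht => hNorth t ht y hy i) (hN0 y hy)
    exact ((hQ2 y hy).differentiableAt two_ne_zero).hasFDerivAt.comp_hasDerivAt (0 : ℝ)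
      ((hasDerivAt_id (0 : ℝ)).prodMk (hasDerivAt_const (0 : ℝ) y))
  have hN' : ∀ j, HasDerivAt (fun t => pd j (N t) x) (-pd j (gradV Φ f) x) 0 := fun j => by
    refine (hasDerivAt_pd j (hQ2 x hx)).congr_deriv ?_
    rw [pd_congr j (Filter.mem_of_superset (hU.mem_nhds hx) hW)]
    simp [pd, fderiv_fun_neg]
  have hpdN : ∀ j, pd j (N 0) x = pd j Φ x := fun j =>
    pd_congr j (Filter.mem_of_superset (hU.mem_nhds hx) hN0)
  have hdet := (himm x hx).det_pos
  have hsff : ∀ i j, HasDerivAt (fun t => sff (Xvar f φ Φ t) (N t) x i j)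
      ((f x + deriv φ 0) * gmet Φ x i j - ⟪pd i Φ x, pd j (gradV Φ f) x⟫) 0 := fun i j => by
    refine ((hasDerivAt_pd_Xvar (hΦ1 x hx) (hf1 x hx) hφ1 i).inner ℝ (hN' j)).congr_deriv ?_
    rw [Xvar_zero hφ0, hpdN, inner_neg_right, inner_add_left, real_inner_smul_left,
      real_inner_smul_left, horth x hx, gmet_apply]
    ring
  have hH := hasDerivAt_Hmean (Y := Xvar f φ Φ) (M := N) (x := x) (a := f x + deriv φ 0)
    (by rw [Xvar_zero hφ0]; exact hdet.ne')
    (by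
      rw [Xvar_zero hφ0]
      exact hasDerivAt_gmet_Xvar (hΦ1 x hx) (hf1 x hx) hφ1 hφ0 (horth x hx))
    hsff (fun i j => by rw [Xvar_zero hφ0, gmet_apply, ← hpdN j]; rfl)
  have hn0 : (n : ℝ) ≠ 0 := by exact_mod_cast (by lia : n ≠ 0)
  have htrace : ∑ i, ∑ j, (gmet Φ x)⁻¹ i j * ((f x + deriv φ 0) * gmet Φ x i j
      - ⟪pd i Φ x, pd j (gradV Φ f) x⟫) = (f x + deriv φ 0) * n - lapl Φ f x := by
    rw [← sum_inner_pd_gradV (hΦ2 x hx) (hf2 x hx) hdet, ← sum_sum_gmet_inv_mul_gmet hdet.ne']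
    simp_rw [Finset.mul_sum, ← Finset.sum_sub_distrib]
    exact Finset.sum_congr rfl fun i _ => Finset.sum_congr rfl fun j _ => by ring
  rw [hH.deriv, Xvar_zero hφ0, htrace]
  field_simp
  ring
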